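/- Every finite two-player zero-sum game contains a strict saddle; that is, there exist nonempty subsets R' ⊆ R and C' ⊆ C such that R' × C' is a strict saddle. -/

import Mathlib

/-- `R1` strictly dominates the set of rows `R2` with respect to the columns `C'`:
every row in `R2` is strictly dominated by some row in `R1`. -/
def RowsStrictlyDominate {R C : Type*} (a : R → C → ℝ) (C' : Finset C)
    (R1 R2 : Finset R) : Prop :=
  ∀ r2 ∈ R2, ∃ r1 ∈ R1, ∀ c ∈ C', a r2 c < a r1 c

/-- `C1` strictly dominates the set of columns `C2` with respect to the rows `R'`. -/
def ColsStrictlyDominate {R C : Type*} (a : R → C → ℝ) (R' : Finset R)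
    (C1 C2 : Finset C) : Prop :=
  ∀ c2 ∈ C2, ∃ c1 ∈ C1, ∀ r ∈ R', a r c1 < a r c2

/-- `R' × C'` is a strict generalized saddle point of the game `a`. -/
def IsStrictGSP {R C : Type*} [Fintype R] [Fintype C] [DecidableEq R] [DecidableEq C]
    (a : R → C → ℝ) (R' : Finset R) (C' : Finset C) : Prop :=
  R'.Nonempty ∧ C'.Nonempty ∧
  RowsStrictlyDominate a C' R' (Finset.univ \ R') ∧
  ColsStrictlyDominate a R' C' (Finset.univ \ C')

/-- `R' × C'` is a strict saddle: a strict GSP none of whose proper (nonempty)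
subproducts is a strict GSP. -/
def IsStrictSaddle {R C : Type*} [Fintype R] [Fintype C] [DecidableEq R] [DecidableEq C]
    (a : R → C → ℝ) (R' : Finset R) (C' : Finset C) : Prop :=
  IsStrictGSP a R' C' ∧
  ∀ R'' C'', R'' ⊆ R' → C'' ⊆ C' → IsStrictGSP a R'' C'' → R'' = R' ∧ C'' = C'

theorem exists_strictSaddle
    {R C : Type*} [Fintype R] [Fintype C] [Nonempty R] [Nonempty C]
    [DecidableEq R] [DecidableEq C] (a : R → C → ℝ) :
    ∃ (R' : Finset R) (C' : Finset C), R'.Nonempty ∧ C'.Nonempty ∧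
      IsStrictSaddle a R' C' := by
  -- The full product is a strict GSP: both domination conditions are vacuous.
  have huniv : IsStrictGSP a Finset.univ Finset.univ :=
    ⟨Finset.univ_nonempty, Finset.univ_nonempty, by simp [RowsStrictlyDominate],
      by simp [ColsStrictlyDominate]⟩
  -- A strict saddle is a minimal strict GSP in the product order on pairs of finsets.
  obtain ⟨⟨R', C'⟩, hmin⟩ := exists_minimal_of_wellFoundedLT
    (fun p : Finset R × Finset C => IsStrictGSP a p.1 p.2) ⟨(Finset.univ, Finset.univ), huniv⟩
  have hG : IsStrictGSP a R' C' := hmin.prop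
  refine ⟨R', C', hG.1, hG.2.1, hG, fun R'' C'' hR hC h => ?_⟩
  have hle := hmin.le_of_le (y := (R'', C'')) h ⟨hR, hC⟩
  exact ⟨hR.antisymm hle.1, hC.antisymm hle.2⟩
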